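/- The function g(r) = (2/π)·𝒦(r)·𝒦'(r) + log(r'/r) is strictly decreasing on (0,1); moreover g(r) → ∞ as r → 0⁺ and g(r) → log 4 as r → 1⁻, so g maps (0,1) onto (log 4, ∞). -/

import Mathlib

open Set Filter

/-- Complete elliptic integral of the first kind. -/
noncomputable def ellK (r : ℝ) : ℝ :=
  ∫ θ in (0:ℝ)..(Real.pi / 2), (1 - r ^ 2 * Real.sin θ ^ 2) ^ (-(1/2) : ℝ)

/-- The Grötzsch modulus μ(r) = (π/2)·𝒦'(r)/𝒦(r). -/
noncomputable def mu (r : ℝ) : ℝ :=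
  Real.pi / 2 * ellK (Real.sqrt (1 - r ^ 2)) / ellK r

namespace EllAux

open Real intervalIntegral MeasureTheory Topology

lemma D_pos {m : ℝ} (h1 : m < 1) (θ : ℝ) : 0 < 1 - m * sin θ ^ 2 := by
  have h := sin_sq_add_cos_sq θ
  rcases (sq_nonneg (sin θ)).eq_or_lt with h0 | h0
  · rw [← h0]; norm_num
  · nlinarith [sq_nonneg (cos θ)]

noncomputable def J (w : ℝ → ℝ) (s m : ℝ) : ℝ :=
  ∫ θ in (0:ℝ)..(π / 2), w θ * (1 - m * sin θ ^ 2) ^ s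

lemma cont {m : ℝ} (h1 : m < 1) {w : ℝ → ℝ} (hw : Continuous w) (s : ℝ) :
    Continuous fun θ => w θ * (1 - m * sin θ ^ 2) ^ s := by
  refine hw.mul (Continuous.rpow_const (by fun_prop) ?_)
  intro θ; left; exact (D_pos h1 θ).ne'

lemma intble {m : ℝ} (h1 : m < 1) {w : ℝ → ℝ} (hw : Continuous w) (s : ℝ) :
    IntervalIntegrable (fun θ => w θ * (1 - m * sin θ ^ 2) ^ s) volume 0 (π / 2) :=
  (cont h1 hw s).intervalIntegrable _ _

lemma hasDerivAt_J {m : ℝ} (h1 : m < 1) {w : ℝ → ℝ} (hw : Continuous w)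
    (hb : ∀ θ, |w θ| ≤ 1) :
    HasDerivAt (J w (-(1/2)))
      (1 / 2 * J (fun θ => w θ * sin θ ^ 2) (-(3/2)) m) m := by
  set c := (1 + m) / 2 with hc
  have hmc : m < c := by rw [hc]; linarith
  have hc1 : c < 1 := by rw [hc]; linarith
  have key := hasDerivAt_integral_of_dominated_loc_of_deriv_le (μ := volume) (a := 0) (b := π / 2)
    (F := fun x θ => w θ * (1 - x * sin θ ^ 2) ^ (-(1/2) : ℝ))
    (F' := fun x θ => 1 / 2 * (w θ * sin θ ^ 2 * (1 - x * sin θ ^ 2) ^ (-(3/2) : ℝ)))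
    (x₀ := m) (s := Set.Iio c) (bound := fun θ => 1 / 2 * ((1:ℝ) * (1 - c * sin θ ^ 2) ^ (-(3/2) : ℝ)))
    (Iio_mem_nhds hmc) ?_ (intble h1 hw _) ?_ ?_ ?_ ?_
  · have := key.2
    rw [intervalIntegral.integral_const_mul] at this
    exact this
  · filter_upwards [Iio_mem_nhds h1] with x hx
    exact (cont hx hw _).aestronglyMeasurable
  · exact (continuous_const.mul
      (cont h1 (hw.mul (by fun_prop : Continuous fun θ => sin θ ^ 2)) _)).aestronglyMeasurable
  · refine Eventually.of_forall fun θ _ x hx => ?_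
    have hx : x < c := hx
    have hs : sin θ ^ 2 ≤ 1 := sin_sq_le_one θ
    have hs0 : 0 ≤ sin θ ^ 2 := sq_nonneg _
    have hD := D_pos (hx.trans hc1) θ
    have hD' := D_pos hc1 θ
    rw [norm_mul, norm_mul, norm_mul]
    have e1 : ‖(1 / 2 : ℝ)‖ = 1 / 2 := by norm_num
    have e2 : ‖sin θ ^ 2‖ = sin θ ^ 2 := by rw [norm_eq_abs, abs_of_nonneg hs0]
    have e3 : ‖(1 - x * sin θ ^ 2) ^ (-(3/2) : ℝ)‖ = (1 - x * sin θ ^ 2) ^ (-(3/2) : ℝ) := by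
      rw [norm_eq_abs, abs_of_nonneg (by positivity)]
    rw [e1, e2, e3]
    refine mul_le_mul_of_nonneg_left ?_ (by norm_num)
    refine mul_le_mul ?_ ?_ (by positivity) (by norm_num)
    · exact mul_le_one₀ (hb θ) hs0 hs
    · exact rpow_le_rpow_of_nonpos hD' (by nlinarith) (by norm_num)
  · exact (continuous_const.mul (cont hc1 continuous_const _)).intervalIntegrable _ _
  · refine Eventually.of_forall fun θ _ x hx => ?_
    have hx : x < c := hx
    have hD := D_pos (hx.trans hc1) θ
    have h : HasDerivAt (fun x : ℝ => 1 - x * sin θ ^ 2) (-(1 * sin θ ^ 2)) x :=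
      ((hasDerivAt_id x).mul_const _).const_sub 1
    have h2 := (h.rpow_const (p := (-(1/2) : ℝ)) (Or.inl hD.ne')).const_mul (w θ)
    refine HasDerivAt.congr_deriv h2 (Eq.symm ?_)
    norm_num
    ring

noncomputable def K (m : ℝ) : ℝ := J (fun _ => 1) (-(1/2)) m
noncomputable def B (m : ℝ) : ℝ := J (fun θ => cos θ ^ 2) (-(1/2)) m

lemma rpow_half {m : ℝ} (h1 : m < 1) (θ : ℝ) :
    (1 - m * sin θ ^ 2) ^ (-(1/2) : ℝ)
      = (1 - m * sin θ ^ 2) * (1 - m * sin θ ^ 2) ^ (-(3/2) : ℝ) := by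
  have := rpow_one_add' (x := 1 - m * sin θ ^ 2) (y := (-(3/2) : ℝ)) (D_pos h1 θ).le (by norm_num)
  rw [← this]; norm_num

lemma ibp {m : ℝ} (h1 : m < 1) :
    B m = (1 - m) * J (fun θ => sin θ ^ 2) (-(3/2)) m := by
  have hd : ∀ θ ∈ uIcc 0 (π / 2), HasDerivAt
      (fun θ => sin θ * cos θ * (1 - m * sin θ ^ 2) ^ (-(1/2) : ℝ))
      (cos θ ^ 2 * (1 - m * sin θ ^ 2) ^ (-(1/2) : ℝ)
        - (1 - m) * (sin θ ^ 2 * (1 - m * sin θ ^ 2) ^ (-(3/2) : ℝ))) θ := by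
    intro θ _
    have hD := D_pos h1 θ
    have h : HasDerivAt (fun θ : ℝ => 1 - m * sin θ ^ 2) (-(m * (2 * sin θ * cos θ))) θ := by
      have := (((hasDerivAt_sin θ).pow 2).const_mul m).const_sub 1
      refine HasDerivAt.congr_deriv this (Eq.symm ?_)
      norm_num
    have h2 := ((hasDerivAt_sin θ).mul (hasDerivAt_cos θ)).mul
      (h.rpow_const (p := (-(1/2) : ℝ)) (Or.inl hD.ne'))
    refine HasDerivAt.congr_deriv h2 (Eq.symm ?_)
    have e : (-(1/2) : ℝ) - 1 = -(3/2) := by norm_num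
    simp only [e, rpow_half h1 θ, Pi.mul_apply]
    have hc : cos θ ^ 2 = 1 - sin θ ^ 2 := by linarith [sin_sq_add_cos_sq θ]
    linear_combination (-m * sin θ ^ 2 * (1 - m * sin θ ^ 2) ^ (-(3/2) : ℝ)) * hc
  have i1 := intble h1 (w := fun θ => cos θ ^ 2) (by fun_prop) (-(1/2))
  have i2 := (intble h1 (w := fun θ => sin θ ^ 2) (by fun_prop) (-(3/2))).const_mul (1 - m)
  have := integral_eq_sub_of_hasDerivAt hd (i1.sub i2)
  rw [intervalIntegral.integral_sub i1 i2, intervalIntegral.integral_const_mul] at this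
  simp at this
  simp only [B, J]
  simp
  linarith

lemma hasDerivAt_K {m : ℝ} (h1 : m < 1) : HasDerivAt K (B m / (2 * (1 - m))) m := by
  have h := hasDerivAt_J h1 (w := fun _ => 1) continuous_const (by simp)
  have hm : (1 - m) ≠ 0 := by linarith
  have e : B m / (2 * (1 - m)) = 1 / 2 * J (fun θ => 1 * sin θ ^ 2) (-(3/2)) m := by
    rw [ibp h1]; simp only [one_mul]; field_simp
  rw [e]; exact h

lemma hasDerivAt_C {m : ℝ} (h1 : m < 1) : HasDerivAt (fun m => m * B m) (K m / 2) m := by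
  have h := hasDerivAt_J h1 (w := fun θ => cos θ ^ 2) (by fun_prop)
    (fun θ => by rw [abs_of_nonneg (sq_nonneg _)]; exact cos_sq_le_one θ)
  have h2 := (hasDerivAt_id m).mul h
  refine HasDerivAt.congr_deriv h2 (Eq.symm ?_)
  have e : J (fun θ => sin θ ^ 2 - m * sin θ ^ 2) (-(3/2)) m = B m := by
    rw [ibp h1]; simp only [J]; rw [← intervalIntegral.integral_const_mul]
    congr 1; ext θ; ring
  have e2 : K m = B m + (J (fun θ => sin θ ^ 2 - m * sin θ ^ 2) (-(3/2)) m
      + m * J (fun θ => cos θ ^ 2 * sin θ ^ 2) (-(3/2)) m) := by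
    simp only [K, B, J]
    rw [← intervalIntegral.integral_const_mul, ← intervalIntegral.integral_add,
      ← intervalIntegral.integral_add]
    · congr 1; ext θ
      rw [rpow_half h1 θ]
      have hc : cos θ ^ 2 = 1 - sin θ ^ 2 := by linarith [sin_sq_add_cos_sq θ]
      rw [hc]; ring
    · exact intble h1 (by fun_prop) _
    · exact (intble h1 (by fun_prop) _).add ((intble h1 (by fun_prop) _).const_mul m)
    · exact intble h1 (by fun_prop) _
    · exact (intble h1 (by fun_prop) _).const_mul m
  rw [e] at e2
  simp only [id, B] at *
  linarith

lemma K_ge {m : ℝ} (h0 : 0 ≤ m) (h1 : m < 1) : π / 2 ≤ K m := by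
  have : ∫ θ in (0:ℝ)..(π / 2), (1:ℝ) = π / 2 := by simp
  rw [← this]
  refine integral_mono_on (by positivity) (by simp) (intble h1 continuous_const _) ?_
  intro θ _
  rw [one_mul]
  exact one_le_rpow_of_pos_of_le_one_of_nonpos (D_pos h1 θ)
    (by nlinarith [sq_nonneg (sin θ)]) (by norm_num)

lemma K_le {m : ℝ} (h0 : 0 ≤ m) (h1 : m < 1) : K m ≤ π / 2 * (√(1 - m))⁻¹ := by
  have : ∫ θ in (0:ℝ)..(π / 2), (√(1 - m))⁻¹ = π / 2 * (√(1 - m))⁻¹ := by simp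
  rw [← this]
  refine integral_mono_on (by positivity) (intble h1 continuous_const _) (by simp) ?_
  intro θ _
  rw [one_mul, sqrt_eq_rpow, ← rpow_neg (by linarith)]
  exact rpow_le_rpow_of_nonpos (by linarith)
    (by nlinarith [sin_sq_le_one θ]) (by norm_num)

lemma B_pos {m : ℝ} (h1 : m < 1) : 0 < B m := by
  refine intervalIntegral_pos_of_pos_on (intble h1 (by fun_prop) _) ?_ (by positivity)
  intro θ hθ
  have : 0 < cos θ := cos_pos_of_mem_Ioo ⟨by linarith [hθ.1, pi_pos], hθ.2⟩
  have := D_pos h1 θ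
  positivity

lemma tendsto_J {w : ℝ → ℝ} (hw : Continuous w)
    (hb : ∀ θ ∈ Icc 0 (π / 2), |w θ| ≤ cos θ) :
    Tendsto (J w (-(1/2))) (𝓝[<] 1)
      (𝓝 (∫ θ in (0:ℝ)..(π / 2), w θ * (cos θ)⁻¹)) := by
  have hI : uIoc (0:ℝ) (π / 2) ⊆ Icc 0 (π / 2) := by
    rw [uIoc_of_le (by positivity)]; exact Ioc_subset_Icc_self
  refine tendsto_integral_filter_of_dominated_convergence (fun _ => 1) ?_ ?_ (by simp) ?_
  · filter_upwards [self_mem_nhdsWithin] with m hm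
    exact (cont hm hw _).aestronglyMeasurable
  · filter_upwards [self_mem_nhdsWithin, Ioo_mem_nhdsLT (zero_lt_one' ℝ)] with m hm hm'
    refine Eventually.of_forall fun θ hθ => ?_
    have h := hb θ (hI hθ)
    have hc : 0 ≤ cos θ := (abs_nonneg _).trans h
    have hD := D_pos hm θ
    rw [norm_mul, norm_eq_abs, norm_eq_abs, abs_of_nonneg (rpow_nonneg hD.le _),
      rpow_neg hD.le, ← sqrt_eq_rpow, ← div_eq_mul_inv, div_le_one (by positivity)]
    refine h.trans (le_sqrt_of_sq_le ?_)
    nlinarith [sin_sq_add_cos_sq θ, sq_nonneg (sin θ), hm'.2]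
  · refine Eventually.of_forall fun θ hθ => ?_
    have h := hb θ (hI hθ)
    have hc : 0 ≤ cos θ := (abs_nonneg _).trans h
    rcases hc.eq_or_lt with h0 | h0
    · rw [← h0] at h
      have : w θ = 0 := abs_nonpos_iff.mp h
      simp [this]
    · have e : (cos θ)⁻¹ = (1 - 1 * sin θ ^ 2) ^ (-(1/2) : ℝ) := by
        have : 1 - 1 * sin θ ^ 2 = cos θ ^ 2 := by linarith [sin_sq_add_cos_sq θ]
        rw [this, rpow_neg (by positivity), ← sqrt_eq_rpow, sqrt_sq hc]
      rw [e]
      refine Tendsto.mono_left ?_ nhdsWithin_le_nhds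
      have hne : (1 - 1 * sin θ ^ 2) ≠ 0 := by
        have := sin_sq_add_cos_sq θ
        nlinarith
      have : ContinuousAt (fun m : ℝ => w θ * (1 - m * sin θ ^ 2) ^ (-(1/2) : ℝ)) 1 :=
        continuousAt_const.mul (ContinuousAt.rpow_const (by fun_prop) (Or.inl hne))
      exact this

lemma tendsto_B : Tendsto B (𝓝[<] 1) (𝓝 1) := by
  have h := tendsto_J (w := fun θ => cos θ ^ 2) (by fun_prop) (fun θ hθ => by
    have : 0 ≤ cos θ := cos_nonneg_of_mem_Icc ⟨by linarith [hθ.1, pi_pos], hθ.2⟩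
    rw [abs_of_nonneg (sq_nonneg _)]
    nlinarith [cos_le_one θ])
  have e : ∫ θ in (0:ℝ)..(π / 2), cos θ ^ 2 * (cos θ)⁻¹ = 1 := by
    have : (fun θ => cos θ ^ 2 * (cos θ)⁻¹) = cos := by
      ext θ; by_cases h : cos θ = 0
      · simp [h]
      · field_simp
    rw [this]; simp
  rw [e] at h; exact h

lemma tendsto_R : Tendsto (J (fun θ => 1 - sin θ) (-(1/2))) (𝓝[<] 1) (𝓝 (log 2)) := by
  have h := tendsto_J (w := fun θ => 1 - sin θ) (by fun_prop) (fun θ hθ => by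
    have : 0 ≤ cos θ := cos_nonneg_of_mem_Icc ⟨by linarith [hθ.1, pi_pos], hθ.2⟩
    have hs : 0 ≤ sin θ := sin_nonneg_of_nonneg_of_le_pi hθ.1 (by linarith [hθ.2, pi_pos])
    have h1 := sin_le_one θ
    rw [abs_of_nonneg (by linarith)]
    refine abs_le_of_sq_le_sq' ?_ this |>.2
    nlinarith [sin_sq_add_cos_sq θ])
  have hs : ∀ θ ∈ uIcc 0 (π / 2), 0 < 1 + sin θ := by
    intro θ hθ
    rw [uIcc_of_le (by positivity)] at hθ
    have hs : 0 ≤ sin θ := sin_nonneg_of_nonneg_of_le_pi hθ.1 (by linarith [hθ.2, pi_pos])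
    linarith
  have e : ∫ θ in (0:ℝ)..(π / 2), (1 - sin θ) * (cos θ)⁻¹ = log 2 := by
    have e1 : ∫ θ in (0:ℝ)..(π / 2), (1 - sin θ) * (cos θ)⁻¹
        = ∫ θ in (0:ℝ)..(π / 2), cos θ / (1 + sin θ) := by
      refine integral_congr fun θ hθ => ?_
      have := hs θ hθ
      by_cases h : cos θ = 0
      · simp [h]
      · field_simp
        linear_combination - sin_sq_add_cos_sq θ
    rw [e1, integral_eq_sub_of_hasDerivAt (f := fun θ => log (1 + sin θ))]
    · norm_num
    · intro θ hθ
      exact ((hasDerivAt_sin θ).const_add 1).log (hs θ hθ).ne'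
    · refine ContinuousOn.intervalIntegrable ?_
      exact ContinuousOn.div (by fun_prop) (by fun_prop) (fun θ hθ => (hs θ hθ).ne')
  rw [e] at h; exact h

lemma J_sin {r : ℝ} (h0 : 0 < r) (h1 : r < 1) :
    J sin (-(1/2)) (r ^ 2) = (log (1 + r) - log (√(1 - r ^ 2))) / r := by
  have hr : r ^ 2 < 1 := by nlinarith
  have : ∀ θ ∈ uIcc 0 (π / 2), HasDerivAt
      (fun θ => - (1 / r * log (r * cos θ + √(1 - r ^ 2 * sin θ ^ 2))))
      (sin θ * (1 - r ^ 2 * sin θ ^ 2) ^ (-(1/2) : ℝ)) θ := by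
    intro θ hθ
    rw [uIcc_of_le (by positivity)] at hθ
    have hc : 0 ≤ cos θ := cos_nonneg_of_mem_Icc ⟨by linarith [hθ.1, pi_pos], hθ.2⟩
    have hD := D_pos hr θ
    have hS : 0 < √(1 - r ^ 2 * sin θ ^ 2) := sqrt_pos.mpr hD
    have h : HasDerivAt (fun θ : ℝ => 1 - r ^ 2 * sin θ ^ 2) (-(r ^ 2 * (2 * sin θ * cos θ))) θ := by
      have := (((hasDerivAt_sin θ).pow 2).const_mul (r ^ 2)).const_sub 1
      refine HasDerivAt.congr_deriv this (Eq.symm ?_)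
      norm_num
    have hP : 0 < r * cos θ + √(1 - r ^ 2 * sin θ ^ 2) := by positivity
    have h2 := (((((hasDerivAt_cos θ).const_mul r).add (h.sqrt hD.ne')).log hP.ne').const_mul
      (1 / r)).neg
    refine HasDerivAt.congr_deriv h2 (Eq.symm ?_)
    rw [rpow_neg hD.le, ← sqrt_eq_rpow]
    simp only [Pi.add_apply]
    generalize √(1 - r ^ 2 * sin θ ^ 2) = S at *
    have := hP.ne'
    field_simp
    ring
  rw [J, integral_eq_sub_of_hasDerivAt this (intble hr continuous_sin _)]
  simp
  field_simp
  ring_nf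

lemma K_split {m : ℝ} (h1 : m < 1) :
    K m = J (fun θ => 1 - sin θ) (-(1/2)) m + J sin (-(1/2)) m := by
  simp only [K, J]
  rw [← intervalIntegral.integral_add (intble h1 (by fun_prop) _) (intble h1 (by fun_prop) _)]
  congr 1; ext θ; ring

lemma hasDerivAt_K' {m : ℝ} (h0 : 0 < m) :
    HasDerivAt (fun m => K (1 - m)) (-(B (1 - m) / (2 * m))) m := by
  have h := hasDerivAt_K (m := 1 - m) (by linarith)
  have h2 := h.comp m ((hasDerivAt_id m).const_sub 1)
  refine HasDerivAt.congr_deriv h2 (Eq.symm ?_)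
  simp

lemma hasDerivAt_C' {m : ℝ} (h0 : 0 < m) :
    HasDerivAt (fun m => (1 - m) * B (1 - m)) (-(K (1 - m) / 2)) m := by
  have h := hasDerivAt_C (m := 1 - m) (by linarith)
  have h2 := h.comp m ((hasDerivAt_id m).const_sub 1)
  refine HasDerivAt.congr_deriv h2 (Eq.symm ?_)
  simp

noncomputable def W (m : ℝ) : ℝ := m * B m * K (1 - m) + K m * ((1 - m) * B (1 - m))

lemma hasDerivAt_W {m : ℝ} (h0 : 0 < m) (h1 : m < 1) : HasDerivAt W 0 m := by
  have h := ((hasDerivAt_C h1).mul (hasDerivAt_K' h0)).add ((hasDerivAt_K h1).mul (hasDerivAt_C' h0))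
  refine HasDerivAt.congr_deriv h (Eq.symm ?_)
  have : 1 - m ≠ 0 := by linarith
  field_simp
  ring

lemma K_zero : K 0 = π / 2 := by simp [K, J]

lemma tendsto_sub : Tendsto (fun m : ℝ => 1 - m) (𝓝[>] 0) (𝓝[<] 1) := by
  refine tendsto_nhdsWithin_iff.mpr ⟨?_, ?_⟩
  · have : Tendsto (fun m : ℝ => 1 - m) (𝓝 0) (𝓝 (1 - 0)) := by
      exact (continuous_const.sub continuous_id).tendsto 0
    rw [sub_zero] at this
    exact this.mono_left nhdsWithin_le_nhds
  · filter_upwards [self_mem_nhdsWithin] with m hm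
    have : 0 < m := hm
    simp only [mem_Iio]; linarith

lemma tendsto_W : Tendsto W (𝓝[>] 0) (𝓝 (π / 2)) := by
  have hK : Tendsto K (𝓝[>] 0) (𝓝 (π / 2)) := by
    rw [← K_zero]
    exact (hasDerivAt_K zero_lt_one).continuousAt.tendsto.mono_left nhdsWithin_le_nhds
  have hC : Tendsto (fun m => (1 - m) * B (1 - m)) (𝓝[>] 0) (𝓝 (1 * 1)) :=
    (tendsto_nhds_of_tendsto_nhdsWithin tendsto_sub).mul (tendsto_B.comp tendsto_sub)
  have hB : Tendsto B (𝓝[>] 0) (𝓝 (B 0)) := by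
    refine Tendsto.mono_left ?_ nhdsWithin_le_nhds
    exact (hasDerivAt_J zero_lt_one (w := fun θ => cos θ ^ 2) (by fun_prop)
      (fun θ => by rw [abs_of_nonneg (sq_nonneg _)]; exact cos_sq_le_one θ)).continuousAt.tendsto
  have hmK : Tendsto (fun m => m * K (1 - m)) (𝓝[>] 0) (𝓝 0) := by
    have hu : Tendsto (fun m : ℝ => π / 2 * √m) (𝓝[>] 0) (𝓝 0) := by
      have : Tendsto (fun m : ℝ => π / 2 * √m) (𝓝 0) (𝓝 (π / 2 * √0)) :=
        (continuous_const.mul continuous_sqrt).tendsto 0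
      simp only [sqrt_zero, mul_zero] at this
      exact this.mono_left nhdsWithin_le_nhds
    refine squeeze_zero' ?_ ?_ hu
    · filter_upwards [Ioo_mem_nhdsGT (zero_lt_one' ℝ)] with m hm
      have := K_ge (m := 1 - m) (by linarith [hm.2]) (by linarith [hm.1])
      have h3 := hm.1
      have : 0 ≤ K (1 - m) := le_trans (by positivity) this
      positivity
    · filter_upwards [Ioo_mem_nhdsGT (zero_lt_one' ℝ)] with m hm
      have := K_le (m := 1 - m) (by linarith [hm.2]) (by linarith [hm.1])
      have h3 := hm.1
      rw [sub_sub_cancel] at this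
      calc m * K (1 - m) ≤ m * (π / 2 * (√m)⁻¹) := mul_le_mul_of_nonneg_left this h3.le
        _ = π / 2 * √m := by
          have hs : √m * √m = m := mul_self_sqrt h3.le
          have : 0 < √m := sqrt_pos.mpr h3
          field_simp
          nlinarith
  have := (hB.mul hmK).add (hK.mul hC)
  simp only [mul_zero, zero_add, mul_one] at this
  refine this.congr fun m => ?_
  simp only [W]; ring

lemma W_eq {m : ℝ} (h0 : 0 < m) (h1 : m < 1) : W m = π / 2 := by
  have hconst : ∀ x ∈ Ioo (0:ℝ) 1, W x = W m := by
    intro x hx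
    refine isOpen_Ioo.is_const_of_deriv_eq_zero isPreconnected_Ioo ?_ ?_ hx ⟨h0, h1⟩
    · intro y hy; exact (hasDerivAt_W hy.1 hy.2).differentiableAt.differentiableWithinAt
    · intro y hy; exact (hasDerivAt_W hy.1 hy.2).deriv
  refine tendsto_nhds_unique (f := W) (l := 𝓝[>] 0) ?_ tendsto_W
  refine tendsto_const_nhds.congr' ?_
  filter_upwards [Ioo_mem_nhdsGT (zero_lt_one' ℝ)] with x hx
  exact (hconst x hx).symm

noncomputable def G (m : ℝ) : ℝ :=
  2 / π * K m * K (1 - m) + (log (1 - m) - log m) / 2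

lemma hasDerivAt_G {m : ℝ} (h0 : 0 < m) (h1 : m < 1) :
    HasDerivAt G (-(2 / π * K m * B (1 - m) / m)) m := by
  have hl : HasDerivAt (fun m : ℝ => (log (1 - m) - log m) / 2) (((-1) / (1 - m) - 1 / m) / 2) m :=
    ((((hasDerivAt_id m).const_sub 1).log (by simp; linarith)).sub
      ((hasDerivAt_id m).log h0.ne')).div_const 2
  have h := (((hasDerivAt_K h1).const_mul (2 / π)).mul (hasDerivAt_K' h0)).add hl
  refine HasDerivAt.congr_deriv h (Eq.symm ?_)
  have hW := W_eq h0 h1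
  rw [W] at hW
  have : 1 - m ≠ 0 := by linarith
  have := pi_pos.ne'
  field_simp
  linear_combination (-2) * hW

lemma G_anti : StrictAntiOn G (Ioo 0 1) := by
  refine strictAntiOn_of_deriv_neg (convex_Ioo 0 1) ?_ ?_
  · intro m hm; exact (hasDerivAt_G hm.1 hm.2).continuousAt.continuousWithinAt
  · intro m hm
    rw [interior_Ioo] at hm
    rw [(hasDerivAt_G hm.1 hm.2).deriv]
    have h0 := hm.1
    have hB := B_pos (m := 1 - m) (by linarith)
    have hK : 0 < K m := lt_of_lt_of_le (by positivity) (K_ge h0.le hm.2)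
    have : 0 < 2 / π * K m * B (1 - m) / m := by positivity
    linarith

lemma sq_mem {r : ℝ} (hr : r ∈ Ioo (0:ℝ) 1) : r ^ 2 ∈ Ioo (0:ℝ) 1 :=
  ⟨by have := hr.1; positivity, by nlinarith [hr.1, hr.2]⟩

lemma ellK_eq (r : ℝ) : ellK r = K (r ^ 2) := by simp [ellK, K, J]

lemma ellK_eq' {r : ℝ} (hr : r ∈ Ioo (0:ℝ) 1) : ellK (√(1 - r ^ 2)) = K (1 - r ^ 2) := by
  rw [ellK_eq, sq_sqrt (by linarith [(sq_mem hr).2])]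

lemma tendsto_K : Tendsto (fun r : ℝ => K (r ^ 2) + log (√(1 - r ^ 2))) (𝓝[<] 1) (𝓝 (log 4)) := by
  have hsq : Tendsto (fun r : ℝ => r ^ 2) (𝓝[<] 1) (𝓝[<] 1) := by
    refine tendsto_nhdsWithin_iff.mpr ⟨?_, ?_⟩
    · have : Tendsto (fun r : ℝ => r ^ 2) (𝓝 1) (𝓝 (1 ^ 2)) := (continuous_pow 2).tendsto 1
      rw [one_pow] at this
      exact this.mono_left nhdsWithin_le_nhds
    · filter_upwards [Ioo_mem_nhdsLT (zero_lt_one' ℝ)] with r hr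
      exact (sq_mem hr).2
  have hR := tendsto_R.comp hsq
  have h1 : Tendsto (fun r : ℝ => log (1 + r) / r) (𝓝[<] 1) (𝓝 (log 2)) := by
    have : ContinuousAt (fun r : ℝ => log (1 + r) / r) 1 := by
      refine ContinuousAt.div (ContinuousAt.log (by fun_prop) (by norm_num)) (by fun_prop) (by norm_num)
    have := this.tendsto
    norm_num at this
    exact this.mono_left nhdsWithin_le_nhds
  have h2 : Tendsto (fun r : ℝ => (√(1 - r ^ 2) * log (√(1 - r ^ 2))) *
      (√(1 - r ^ 2) * (-1 / (r * (1 + r))))) (𝓝[<] 1) (𝓝 0) := by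
    have : ContinuousAt (fun r : ℝ => (√(1 - r ^ 2) * log (√(1 - r ^ 2))) *
      (√(1 - r ^ 2) * (-1 / (r * (1 + r))))) 1 := by
      refine ContinuousAt.mul ?_ ?_
      · exact (continuous_mul_log.comp (by fun_prop : Continuous fun r : ℝ => √(1 - r ^ 2))).continuousAt
      · refine ContinuousAt.mul (by fun_prop) (ContinuousAt.div (by fun_prop) (by fun_prop) (by norm_num))
    have := this.tendsto
    norm_num at this
    refine Tendsto.mono_left ?_ nhdsWithin_le_nhds
    convert this using 2
  have h := (hR.add h1).add h2
  have e : log 2 + log 2 + 0 = log 4 := by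
    rw [add_zero, ← log_mul (by norm_num) (by norm_num)]; norm_num
  rw [e] at h
  refine h.congr' ?_
  filter_upwards [Ioo_mem_nhdsLT (zero_lt_one' ℝ)] with r hr
  have h0 := hr.1
  have hs : √(1 - r ^ 2) * √(1 - r ^ 2) = 1 - r ^ 2 := mul_self_sqrt (by linarith [(sq_mem hr).2])
  rw [K_split (sq_mem hr).2, J_sin hr.1 hr.2]
  simp only [Function.comp]
  generalize log √(1 - r ^ 2) = L
  generalize √(1 - r ^ 2) = S at *
  field_simp
  linear_combination (-L) * hs

end EllAux

open EllAux in
theorem stmt_3 (g : ℝ → ℝ)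
    (hg : g = fun r : ℝ => 2 / Real.pi * ellK r * ellK (Real.sqrt (1 - r ^ 2)) +
      Real.log (Real.sqrt (1 - r ^ 2) / r)) :
    StrictAntiOn g (Set.Ioo 0 1) ∧
    Filter.Tendsto g (nhdsWithin 0 (Set.Ioi 0)) Filter.atTop ∧
    Filter.Tendsto g (nhdsWithin 1 (Set.Iio 1)) (nhds (Real.log 4)) ∧
    g '' Set.Ioo 0 1 = Set.Ioi (Real.log 4) := by
  have hpi := Real.pi_pos
  have gG : ∀ r ∈ Ioo (0:ℝ) 1, g r = G (r ^ 2) := by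
    intro r hr
    have h2 := sq_mem hr
    have h3 : 0 < Real.sqrt (1 - r ^ 2) := Real.sqrt_pos.mpr (by linarith [h2.2])
    rw [hg]
    simp only [G]
    rw [ellK_eq, ellK_eq' hr, Real.log_div h3.ne' hr.1.ne', Real.log_sqrt (by linarith [h2.2]),
      Real.log_pow]
    push_cast
    ring
  have hanti : StrictAntiOn g (Ioo 0 1) := by
    intro a ha b hb hab
    rw [gG a ha, gG b hb]
    exact G_anti (sq_mem ha) (sq_mem hb) (by nlinarith [ha.1])
  have hcont : ContinuousOn g (Ioo 0 1) := by
    have : ContinuousOn (fun r : ℝ => G (r ^ 2)) (Ioo 0 1) := by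
      refine ContinuousOn.comp (t := Ioo 0 1) (g := G) (f := fun r : ℝ => r ^ 2) ?_ (by fun_prop) (fun r hr => sq_mem hr)
      intro m hm
      exact (hasDerivAt_G hm.1 hm.2).continuousAt.continuousWithinAt
    exact this.congr gG
  have htop : Filter.Tendsto g (nhdsWithin 0 (Set.Ioi 0)) Filter.atTop := by
    have h1 : Tendsto (fun r : ℝ => -Real.log r) (nhdsWithin 0 (Ioi 0)) atTop :=
      tendsto_neg_atBot_atTop.comp Real.tendsto_log_nhdsGT_zero
    have h2 : Tendsto (fun r : ℝ => Real.log (Real.sqrt (1 - r ^ 2))) (nhdsWithin 0 (Ioi 0))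
        (nhds 0) := by
      have : ContinuousAt (fun r : ℝ => Real.log (Real.sqrt (1 - r ^ 2))) 0 :=
        ContinuousAt.log (by fun_prop) (by norm_num)
      have := this.tendsto
      norm_num at this
      exact this.mono_left nhdsWithin_le_nhds
    refine tendsto_atTop_mono' _ ?_ (h2.add_atTop h1)
    filter_upwards [Ioo_mem_nhdsGT (zero_lt_one' ℝ)] with r hr
    have hr2 := sq_mem hr
    have h3 : 0 < Real.sqrt (1 - r ^ 2) := Real.sqrt_pos.mpr (by linarith [hr2.2])
    have ha := K_ge hr2.1.le hr2.2
    have hb := K_ge (m := 1 - r ^ 2) (by linarith [hr2.2]) (by linarith [hr2.1])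
    rw [hg]
    simp only
    rw [ellK_eq, ellK_eq' hr, Real.log_div h3.ne' hr.1.ne']
    have : 0 ≤ 2 / Real.pi * K (r ^ 2) * K (1 - r ^ 2) := by
      have : 0 ≤ K (r ^ 2) := by linarith
      have : 0 ≤ K (1 - r ^ 2) := by linarith
      positivity
    linarith
  have hlog : Filter.Tendsto g (nhdsWithin 1 (Set.Iio 1)) (nhds (Real.log 4)) := by
    have hA : Tendsto (fun r : ℝ => K (r ^ 2) * (2 / Real.pi * K (1 - r ^ 2) - 1))
        (nhdsWithin 1 (Iio 1)) (nhds 0) := by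
      have hu : Tendsto (fun r : ℝ => Real.pi / 2 * Real.sqrt (1 - r ^ 2) / r)
          (nhdsWithin 1 (Iio 1)) (nhds 0) := by
        have : ContinuousAt (fun r : ℝ => Real.pi / 2 * Real.sqrt (1 - r ^ 2) / r) 1 :=
          ContinuousAt.div (by fun_prop) (by fun_prop) (by norm_num)
        have := this.tendsto
        norm_num at this
        exact this.mono_left nhdsWithin_le_nhds
      have hev : ∀ᶠ r : ℝ in nhdsWithin 1 (Iio 1), r ∈ Ioo (0:ℝ) 1 :=
        Ioo_mem_nhdsLT (zero_lt_one' ℝ)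
      refine squeeze_zero' ?_ ?_ hu
      · filter_upwards [hev] with r hr
        have hr2 := sq_mem hr
        have ha := K_ge hr2.1.le hr2.2
        have hb := K_ge (m := 1 - r ^ 2) (by linarith [hr2.2]) (by linarith [hr2.1])
        refine mul_nonneg (by linarith) ?_
        have : 2 / Real.pi * (Real.pi / 2) ≤ 2 / Real.pi * K (1 - r ^ 2) :=
          mul_le_mul_of_nonneg_left hb (by positivity)
        have e : 2 / Real.pi * (Real.pi / 2) = 1 := by field_simp
        linarith
      · filter_upwards [hev] with r hr
        have hr2 := sq_mem hr
        have h0 := hr.1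
        have h3 : 0 < Real.sqrt (1 - r ^ 2) := Real.sqrt_pos.mpr (by linarith [hr2.2])
        have hs : Real.sqrt (1 - r ^ 2) * Real.sqrt (1 - r ^ 2) = 1 - r ^ 2 :=
          Real.mul_self_sqrt (by linarith [hr2.2])
        have ha := K_le hr2.1.le hr2.2
        have ha0 := K_ge hr2.1.le hr2.2
        have hb := K_le (m := 1 - r ^ 2) (by linarith [hr2.2]) (by linarith [hr2.1])
        rw [sub_sub_cancel, Real.sqrt_sq h0.le] at hb
        have h4 : 2 / Real.pi * K (1 - r ^ 2) - 1 ≤ (1 - r ^ 2) / r := by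
          have : 2 / Real.pi * K (1 - r ^ 2) ≤ 2 / Real.pi * (Real.pi / 2 * r⁻¹) :=
            mul_le_mul_of_nonneg_left hb (by positivity)
          have e : 2 / Real.pi * (Real.pi / 2 * r⁻¹) = 1 / r := by field_simp
          have e2 : 1 / r - 1 ≤ (1 - r ^ 2) / r := by
            rw [div_sub_one h0.ne']
            gcongr
            nlinarith [hr.2]
          linarith
        have h5 : 0 ≤ (1 - r ^ 2) / r := div_nonneg (by linarith [hr2.2]) h0.le
        calc K (r ^ 2) * (2 / Real.pi * K (1 - r ^ 2) - 1)
            ≤ K (r ^ 2) * ((1 - r ^ 2) / r) := mul_le_mul_of_nonneg_left h4 (by linarith)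
          _ ≤ (Real.pi / 2 * (Real.sqrt (1 - r ^ 2))⁻¹) * ((1 - r ^ 2) / r) :=
              mul_le_mul_of_nonneg_right ha h5
          _ = Real.pi / 2 * Real.sqrt (1 - r ^ 2) / r := by
              generalize Real.sqrt (1 - r ^ 2) = S at *
              rw [← hs]
              field_simp
    have hL : Tendsto (fun r : ℝ => - Real.log r) (nhdsWithin 1 (Iio 1)) (nhds 0) := by
      have : ContinuousAt (fun r : ℝ => - Real.log r) 1 :=
        (ContinuousAt.log (by fun_prop) (by norm_num)).neg
      have := this.tendsto
      norm_num at this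
      exact this.mono_left nhdsWithin_le_nhds
    have h := (hA.add tendsto_K).add hL
    rw [zero_add, add_zero] at h
    refine h.congr' ?_
    filter_upwards [Ioo_mem_nhdsLT (zero_lt_one' ℝ)] with r hr
    have h3 : 0 < Real.sqrt (1 - r ^ 2) := Real.sqrt_pos.mpr (by linarith [(sq_mem hr).2])
    rw [hg]
    simp only
    rw [ellK_eq, ellK_eq' hr, Real.log_div h3.ne' hr.1.ne']
    ring
  refine ⟨hanti, htop, hlog, Subset.antisymm ?_ ?_⟩
  · rintro _ ⟨r, hr, rfl⟩
    have hm : (r + 1) / 2 ∈ Ioo (0:ℝ) 1 := ⟨by linarith [hr.1], by linarith [hr.2]⟩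
    have h1 : g ((r + 1) / 2) < g r := hanti hr hm (by linarith [hr.2])
    refine lt_of_le_of_lt (le_of_tendsto hlog ?_) h1
    filter_upwards [Ioo_mem_nhdsLT hm.2] with s hs
    exact (hanti hm ⟨hm.1.trans hs.1, hs.2⟩ hs.1).le
  · refine isPreconnected_Ioo.intermediate_value_Ioi (l₁ := nhdsWithin 1 (Iio 1))
      (l₂ := nhdsWithin 0 (Ioi 0)) ?_ ?_ hcont hlog htop
    · exact le_principal_iff.mpr (Ioo_mem_nhdsLT (zero_lt_one' ℝ))
    · exact le_principal_iff.mpr (Ioo_mem_nhdsGT (zero_lt_one' ℝ))
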